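/- If X is weird and X ⊆ ∏_{j<n} Z_j with n finite and each Z_j compact Hausdorff, then some Z_j has a weird subspace. -/

import Mathlib

/-- A space is scattered iff every nonempty subset has a point isolated in it. -/
def ScatteredSpace (X : Type*) [TopologicalSpace X] : Prop :=
  ∀ S : Set X, S.Nonempty → ∃ x ∈ S, ∃ U : Set X, IsOpen U ∧ U ∩ S = {x}

/-- A space is weird iff it is compact Hausdorff, not scattered, and no subset
is simultaneously perfect (closed, nonempty, no isolated points) and totally
disconnected. -/
def Weird (X : Type*) [TopologicalSpace X] : Prop :=
  CompactSpace X ∧ T2Space X ∧ ¬ ScatteredSpace X ∧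
    ∀ P : Set X, Perfect P → P.Nonempty → ¬ IsTotallyDisconnected P

open Set Topology

/-- A space that is not scattered contains a nonempty perfect set. -/
theorem exists_perfect_nonempty_of_not_scatteredSpace {X : Type*} [TopologicalSpace X] [T1Space X]
    (h : ¬ ScatteredSpace X) : ∃ K : Set X, Perfect K ∧ K.Nonempty := by
  unfold ScatteredSpace at h
  push Not at h
  obtain ⟨S, hS, hiso⟩ := h
  refine ⟨closure S, Preperfect.perfect_closure fun x hx => ?_, hS.closure⟩
  rw [accPt_iff_nhds]
  intro U hU
  obtain ⟨V, hVU, hV, hxV⟩ := mem_nhds_iff.1 hU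
  by_contra! hcon
  refine hiso x hx V hV (Subset.antisymm (fun y hy => hcon y ⟨hVU hy.1, hy.2⟩) ?_)
  rintro _ rfl
  exact ⟨hxV, hx⟩

/-- A closed set whose image contains a perfect set `P` contains a perfect set with image `P`. -/
theorem exists_perfect_subset_image_eq {W Z : Type*} [TopologicalSpace W] [CompactSpace W]
    [TopologicalSpace Z] [T2Space Z] {f : W → Z} (hf : Continuous f) {K : Set W}
    (hK : IsClosed K) {P : Set Z} (hP : Perfect P) (hPK : P ⊆ f '' K) :
    ∃ L ⊆ K, Perfect L ∧ f '' L = P := by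
  obtain ⟨L, hLK, ⟨hL, hPL⟩, hmin⟩ := zorn_superset_nonempty
    {L : Set W | IsClosed L ∧ P ⊆ f '' L} (fun c hc hchain hne => by
      refine ⟨⋂₀ c, ⟨isClosed_sInter fun s hs => (hc hs).1, fun z hz => ?_⟩,
        fun s hs => sInter_subset_of_mem hs⟩
      have : Nonempty c := hne.to_subtype
      have hcl : ∀ s : c, IsClosed ((s : Set W) ∩ f ⁻¹' {z}) := fun s =>
        (hc s.2).1.inter (isClosed_singleton.preimage hf)
      obtain ⟨x, hx⟩ := IsCompact.nonempty_iInter_of_directed_nonempty_isCompact_isClosed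
        (fun s : c => (s : Set W) ∩ f ⁻¹' {z})
        (fun s t => by
          obtain h | h := hchain.total s.2 t.2
          · exact ⟨s, Subset.rfl, inter_subset_inter_left _ h⟩
          · exact ⟨t, inter_subset_inter_left _ h, Subset.rfl⟩)
        (fun s => by
          obtain ⟨x, hx, hxz⟩ := (hc s.2).2 hz
          exact ⟨x, hx, hxz⟩)
        (fun s => (hcl s).isCompact) hcl
      rw [mem_iInter] at hx
      exact ⟨x, fun s hs => (hx ⟨s, hs⟩).1, (hx (Classical.arbitrary c)).2⟩)
    K ⟨hK, hPK⟩
  have himg : f '' L = P := by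
    have hLP : L ⊆ L ∩ f ⁻¹' P := hmin ⟨hL.inter (hP.closed.preimage hf), fun z hz => by
      obtain ⟨x, hx, rfl⟩ := hPL hz
      exact ⟨x, ⟨hx, hz⟩, rfl⟩⟩ inter_subset_left
    exact Subset.antisymm (image_subset_iff.2 fun x hx => (hLP hx).2) hPL
  refine ⟨L, hLK, ⟨hL, fun x hx => ?_⟩, himg⟩
  rw [accPt_iff_nhds]
  by_contra! hcon
  obtain ⟨U, hU, hcon⟩ := hcon
  obtain ⟨V, hVU, hV, hxV⟩ := mem_nhds_iff.1 hU
  have hF : IsClosed (L \ V) := hL.sdiff hV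
  have hne : ∀ z ∈ P, z ≠ f x → z ∈ f '' (L \ V) := by
    intro z hz hzx
    obtain ⟨w, hw, rfl⟩ := hPL hz
    exact ⟨w, ⟨hw, fun hwV => hzx (congrArg f (hcon w ⟨hVU hwV, hw⟩))⟩, rfl⟩
  have hPF : P ⊆ f '' (L \ V) := by
    intro z hz
    rw [← (hF.isCompact.image hf).isClosed.closure_eq, mem_closure_iff_nhds]
    intro O hO
    by_cases hzx : z = f x
    · subst hzx
      obtain ⟨y, hy, hyx⟩ := accPt_iff_nhds.1 (hP.acc _ hz) O hO
      exact ⟨y, hy.1, hne y hy.2 hyx⟩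
    · exact ⟨z, mem_of_mem_nhds hO, hne z hz hzx⟩
  exact (hmin ⟨hF, hPF⟩ sdiff_subset hx).2 hxV

/-- If `Z` has no weird subspace, then every nonempty perfect subset of a compact space mapping to
`Z` can be shrunk to a nonempty perfect set with totally disconnected image. -/
theorem Perfect.exists_subset_isTotallyDisconnected_image {W Z : Type*} [TopologicalSpace W]
    [CompactSpace W] [TopologicalSpace Z] [T2Space Z]
    (hZ : ∀ S : Set Z, ¬ Weird S) {f : W → Z} (hf : Continuous f) {K : Set W}
    (hK : Perfect K) (hne : K.Nonempty) :
    ∃ L ⊆ K, Perfect L ∧ L.Nonempty ∧ IsTotallyDisconnected (f '' L) := by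
  have hc : IsCompact (f '' K) := hK.closed.isCompact.image hf
  by_cases hs : ScatteredSpace (f '' K)
  · obtain ⟨⟨_, x, hx, rfl⟩, -, U, hU, hUx⟩ :=
      hs univ ⟨⟨_, mem_image_of_mem f hne.some_mem⟩, trivial⟩
    obtain ⟨V, hV, rfl⟩ := isOpen_induced_iff.1 hU
    have hVK : ∀ y ∈ K, f y ∈ V ↔ f y = f x := by
      intro y hy
      have := Set.ext_iff.1 hUx ⟨f y, mem_image_of_mem f hy⟩
      simpa [Subtype.ext_iff] using this
    have heq : f ⁻¹' V ∩ K = K ∩ f ⁻¹' {f x} := by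
      ext y
      constructor
      · exact fun h => ⟨h.2, (hVK y h.2).1 h.1⟩
      · exact fun h => ⟨(hVK y h.1).2 h.2, h.1⟩
    refine ⟨K ∩ f ⁻¹' {f x}, inter_subset_left,
      ⟨hK.closed.inter (isClosed_singleton.preimage hf), ?_⟩, ⟨x, hx, rfl⟩, ?_⟩
    · rw [← heq]
      exact hK.acc.open_inter (hV.preimage hf)
    · exact fun t ht _ => subsingleton_singleton.anti
        (ht.trans (image_subset_iff.2 inter_subset_right))
  · have hw := hZ (f '' K)
    unfold Weird at hw
    push Not at hw
    obtain ⟨P, hP, hPne, hPtd⟩ := hw (isCompact_iff_compactSpace.1 hc) inferInstance hs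
    have hP' : Perfect (Subtype.val '' P) := by
      refine ⟨hc.isClosed.isClosedMap_subtype_val _ hP.closed, ?_⟩
      rintro _ ⟨x, hx, rfl⟩
      rw [accPt_iff_nhds]
      intro U hU
      obtain ⟨y, hy, hyx⟩ := accPt_iff_nhds.1 (hP.acc x hx) _
        (continuous_subtype_val.continuousAt.preimage_mem_nhds hU)
      exact ⟨y, ⟨hy.1, y, hy.2, rfl⟩, fun h => hyx (Subtype.ext h)⟩
    obtain ⟨L, hLK, hL, hLP⟩ := exists_perfect_subset_image_eq hf hK.closed hP'
      (Subtype.coe_image_subset _ _)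
    refine ⟨L, hLK, hL, ?_, ?_⟩
    · rw [← image_nonempty (f := f), hLP]
      exact hPne.image _
    · rw [hLP]
      exact IsEmbedding.subtypeVal.isTotallyDisconnected_image.2 hPtd

theorem stmt7 (n : ℕ) (Z : Fin n → Type*) [∀ j, TopologicalSpace (Z j)]
    [∀ j, CompactSpace (Z j)] [∀ j, T2Space (Z j)]
    (X : Set (∀ j, Z j)) (hX : Weird X) :
    ∃ j, ∃ S : Set (Z j), Weird S := by
  by_contra! hZ
  obtain ⟨hXc, -, hXs, hXtd⟩ := hX
  have hcont (j : Fin n) : Continuous fun x : X => x.1 j :=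
    (continuous_apply j).comp continuous_subtype_val
  have key : ∀ s : Finset (Fin n), ∃ K : Set X, Perfect K ∧ K.Nonempty ∧
      ∀ j ∈ s, IsTotallyDisconnected ((fun x : X => x.1 j) '' K) := by
    intro s
    induction s using Finset.induction_on with
    | empty =>
      obtain ⟨K, hK, hne⟩ := exists_perfect_nonempty_of_not_scatteredSpace hXs
      exact ⟨K, hK, hne, by simp⟩
    | insert i s _ ih =>
      obtain ⟨K, hK, hne, htd⟩ := ih
      obtain ⟨L, hLK, hL, hLne, hLtd⟩ := hK.exists_subset_isTotallyDisconnected_image (hZ i)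
        (f := fun x : X => x.1 i) (hcont i) hne
      refine ⟨L, hL, hLne, fun j hj => ?_⟩
      obtain rfl | hj := Finset.mem_insert.1 hj
      · exact hLtd
      · exact fun t ht => htd j hj t (ht.trans (image_mono hLK))
  obtain ⟨K, hK, hne, htd⟩ := key Finset.univ
  refine hXtd K hK hne fun T hTK hT x hx y hy => Subtype.ext (funext fun j => ?_)
  exact htd j (Finset.mem_univ j) _ (image_mono hTK)
    (hT.image (fun x : X => x.1 j) (hcont j).continuousOn)
    (mem_image_of_mem _ hx) (mem_image_of_mem _ hy)
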